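/- In dimension 1, for ε ∈ (0,1) let μ^ε = (½ − ε/2)(δ_{−1} + δ_1) + ε·δ_0 and μ^0 = ½(δ_{−1} + δ_1), and let ρ be the Lebesgue (uniform) measure on [−½, ½]. Then: (i) W₂²(μ^0, μ^ε) = ε; (ii) ½W₂²(μ^ε, ρ) − ½W₂²(μ^0, ρ) = ε²/4 − ε/2; (iii) ∫ ‖x‖²/2 d(μ^ε − μ^0)(x) = −ε/2; consequently, for the Kantorovich potential ψ_{ρ→μ^0} that vanishes identically on [−1,1], the convexity gap satisfies ½W₂²(μ^ε,ρ) − ½W₂²(μ^0,ρ) − ⟨½‖·‖² − ψ_{ρ→μ^0}, μ^ε − μ^0⟩ = ε²/4 = ¼·W₂⁴(μ^0, μ^ε). -/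

import Mathlib

noncomputable section

open MeasureTheory Metric Set
open scoped ENNReal NNReal RealInnerProductSpace

/-- The set of transport plans (couplings) between two measures. -/
def Couplings {α β : Type*} [MeasurableSpace α] [MeasurableSpace β]
    (ρ : Measure α) (μ : Measure β) : Set (Measure (α × β)) :=
  {γ | γ.map Prod.fst = ρ ∧ γ.map Prod.snd = μ}

/-- The 2-Wasserstein distance between two measures on a normed space. -/
def W2 {α : Type*} [MeasurableSpace α] [NormedAddCommGroup α] (ρ μ : Measure α) : ℝ :=
  Real.sqrt (sInf ((fun γ : Measure (α × α) => ∫ p, ‖p.1 - p.2‖ ^ 2 ∂γ) '' Couplings ρ μ))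

/-- The 1-Wasserstein distance between measures on the space of measures,
with ground cost `W2`. -/
def Wc1 {α : Type*} [MeasurableSpace α] [NormedAddCommGroup α]
    (P Q : Measure (Measure α)) : ℝ :=
  sInf ((fun γ : Measure (Measure α × Measure α) => ∫ p, W2 p.1 p.2 ∂γ) '' Couplings P Q)

/-- The variance functional `F_P`. -/
def Fvar {α : Type*} [MeasurableSpace α] [NormedAddCommGroup α]
    (P : Measure (Measure α)) (μ : Measure α) : ℝ :=
  (1 / 2) * ∫ ρ, W2 ρ μ ^ 2 ∂P

abbrev Euc (d : ℕ) : Type := EuclideanSpace ℝ (Fin d)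

/-- `ρ` is a Borel probability measure concentrated on `Ω`. -/
def ProbOn {d : ℕ} (Ω : Set (Euc d)) (ρ : Measure (Euc d)) : Prop :=
  IsProbabilityMeasure ρ ∧ ρ Ωᶜ = 0

/-- `P` is a Borel probability measure on the probability measures over `Ω`. -/
def PProbOn {d : ℕ} (Ω : Set (Euc d)) (P : Measure (Measure (Euc d))) : Prop :=
  IsProbabilityMeasure P ∧ P {ρ | ¬ ProbOn Ω ρ} = 0

/-- `μ` is a Wasserstein barycenter of `P` (a minimizer of `Fvar P` over `P(Ω)`). -/
def IsBary {d : ℕ} (Ω : Set (Euc d)) (P : Measure (Measure (Euc d)))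
    (μ : Measure (Euc d)) : Prop :=
  ProbOn Ω μ ∧ ∀ ν, ProbOn Ω ν → Fvar P μ ≤ Fvar P ν

/-- `μ^ε = (½ - ε/2)(δ_{-1} + δ_1) + ε δ_0`. -/
def muEps (ε : ℝ) : Measure ℝ :=
  ENNReal.ofReal (1 / 2 - ε / 2) • (Measure.dirac (-1 : ℝ) + Measure.dirac (1 : ℝ)) +
    ENNReal.ofReal ε • Measure.dirac (0 : ℝ)

/-- `μ⁰ = ½(δ_{-1} + δ_1)`. -/
def muZero : Measure ℝ :=
  (2 : ℝ≥0∞)⁻¹ • (Measure.dirac (-1 : ℝ) + Measure.dirac (1 : ℝ))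

/-- `ρ` is the uniform (Lebesgue) measure on `[-½, ½]`. -/
def rhoUnif : Measure ℝ := volume.restrict (Set.Icc (-(1 / 2) : ℝ) (1 / 2))

/-! By Kantorovich duality, potentials with `⟪x, y⟫ ≤ φ x + ψ y` and a plan on which equality holds
compute a squared Wasserstein distance, `W₂² = ∫ ‖x‖² + ∫ ‖y‖² - 2 (∫ φ + ∫ ψ)`, so it is enough to
exhibit them. On `|x| ≤ 1` one can take

* for `(μ⁰, μ^ε)`: `φ = 0` and `ψ y = |y|`, with the plan that keeps the fraction `1 - ε` of `μ⁰` in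
  place and sends the rest to `0`;
* for `(μ^ε, ρ)`: `φ x = (ε / 2) |x|` and its conjugate `ψ y = max 0 (|y| - ε / 2)`, with the plan
  induced by the monotone map from `ρ` to `μ^ε`, which cuts `[-1/2, 1/2]` at `±ε / 2`. For `ε = 0`
  this `φ` is the potential `ψ_{ρ→μ⁰}` that vanishes on `[-1, 1]`. -/

section Couplings

variable {α β : Type*} [MeasurableSpace α] [MeasurableSpace β]
  {ρ ρ₁ ρ₂ : Measure α} {μ μ₁ μ₂ : Measure β} {γ γ₁ γ₂ : Measure (α × β)}

lemma measurePreserving_fst_of_mem_couplings (hγ : γ ∈ Couplings ρ μ) :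
    MeasurePreserving Prod.fst γ ρ :=
  ⟨measurable_fst, hγ.1⟩

lemma measurePreserving_snd_of_mem_couplings (hγ : γ ∈ Couplings ρ μ) :
    MeasurePreserving Prod.snd γ μ :=
  ⟨measurable_snd, hγ.2⟩

lemma map_prodMk_mem_couplings {Ω : Type*} [MeasurableSpace Ω] {f : Ω → α} {g : Ω → β}
    (hf : Measurable f) (hg : Measurable g) (P : Measure Ω) :
    P.map (fun ω ↦ (f ω, g ω)) ∈ Couplings (P.map f) (P.map g) :=
  ⟨Measure.fst_map_prodMk hg, Measure.snd_map_prodMk hf⟩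

lemma add_mem_couplings (h₁ : γ₁ ∈ Couplings ρ₁ μ₁) (h₂ : γ₂ ∈ Couplings ρ₂ μ₂) :
    γ₁ + γ₂ ∈ Couplings (ρ₁ + ρ₂) (μ₁ + μ₂) :=
  ⟨by rw [Measure.map_add _ _ measurable_fst, h₁.1, h₂.1],
    by rw [Measure.map_add _ _ measurable_snd, h₁.2, h₂.2]⟩

lemma smul_mem_couplings (h : γ ∈ Couplings ρ μ) (c : ℝ≥0∞) :
    c • γ ∈ Couplings (c • ρ) (c • μ) :=
  ⟨by rw [Measure.map_smul, h.1], by rw [Measure.map_smul, h.2]⟩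

lemma integrable_comp_fst_add_comp_snd {f : α → ℝ} {g : β → ℝ} (hγ : γ ∈ Couplings ρ μ)
    (hf : Integrable f ρ) (hg : Integrable g μ) :
    Integrable (fun p : α × β ↦ f p.1 + g p.2) γ :=
  ((measurePreserving_fst_of_mem_couplings hγ).integrable_comp_of_integrable hf).add
    ((measurePreserving_snd_of_mem_couplings hγ).integrable_comp_of_integrable hg)

lemma integral_comp_fst_add_comp_snd {f : α → ℝ} {g : β → ℝ} (hγ : γ ∈ Couplings ρ μ)
    (hf : Integrable f ρ) (hg : Integrable g μ) :
    ∫ p, (f p.1 + g p.2) ∂γ = ∫ x, f x ∂ρ + ∫ y, g y ∂μ := by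
  have hfst := measurePreserving_fst_of_mem_couplings hγ
  have hsnd := measurePreserving_snd_of_mem_couplings hγ
  have integral_fst : ∫ x, f x ∂ρ = ∫ p, f p.1 ∂γ := by
    rw [← hfst.map_eq, integral_map hfst.aemeasurable (hfst.map_eq ▸ hf.1)]
  have integral_snd : ∫ y, g y ∂μ = ∫ p, g p.2 ∂γ := by
    rw [← hsnd.map_eq, integral_map hsnd.aemeasurable (hsnd.map_eq ▸ hg.1)]
  rw [integral_fst, integral_snd]
  exact integral_add (hfst.integrable_comp_of_integrable hf) (hsnd.integrable_comp_of_integrable hg)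

end Couplings

section Duality

variable {E : Type*} [NormedAddCommGroup E] [MeasurableSpace E] {ρ μ : Measure E}
  {γ : Measure (E × E)}

lemma integrable_norm_sub_sq (hγ : γ ∈ Couplings ρ μ) (hρ : MemLp id 2 ρ) (hμ : MemLp id 2 μ) :
    Integrable (fun p : E × E ↦ ‖p.1 - p.2‖ ^ 2) γ :=
  ((hρ.comp_measurePreserving (measurePreserving_fst_of_mem_couplings hγ)).sub
    (hμ.comp_measurePreserving (measurePreserving_snd_of_mem_couplings hγ))).integrable_norm_pow
    two_ne_zero

theorem W2_sq_eq_of_add_le_norm_sub_sq {f g : E → ℝ} (hρ : MemLp id 2 ρ) (hμ : MemLp id 2 μ)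
    (hf : Integrable f ρ) (hg : Integrable g μ)
    (hle : ∀ᵐ x ∂ρ, ∀ y, f x + g y ≤ ‖x - y‖ ^ 2) (hγ : γ ∈ Couplings ρ μ)
    (heq : ∀ᵐ p ∂γ, f p.1 + g p.2 = ‖p.1 - p.2‖ ^ 2) :
    W2 ρ μ ^ 2 = ∫ x, f x ∂ρ + ∫ y, g y ∂μ := by
  have cost_eq : ∫ p, ‖p.1 - p.2‖ ^ 2 ∂γ = ∫ x, f x ∂ρ + ∫ y, g y ∂μ := by
    rw [← integral_comp_fst_add_comp_snd hγ hf hg]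
    exact integral_congr_ae (heq.mono fun _ ↦ Eq.symm)
  have le_cost (γ' : Measure (E × E)) (hγ' : γ' ∈ Couplings ρ μ) :
      ∫ x, f x ∂ρ + ∫ y, g y ∂μ ≤ ∫ p, ‖p.1 - p.2‖ ^ 2 ∂γ' := by
    rw [← integral_comp_fst_add_comp_snd hγ' hf hg]
    refine integral_mono_ae (integrable_comp_fst_add_comp_snd hγ' hf hg)
      (integrable_norm_sub_sq hγ' hρ hμ) ?_
    filter_upwards [(measurePreserving_fst_of_mem_couplings hγ').quasiMeasurePreserving.ae hle]
      with p hp using hp p.2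
  have isLeast : IsLeast ((fun γ' : Measure (E × E) ↦ ∫ p, ‖p.1 - p.2‖ ^ 2 ∂γ') '' Couplings ρ μ)
      (∫ x, f x ∂ρ + ∫ y, g y ∂μ) :=
    ⟨⟨γ, hγ, cost_eq⟩, forall_mem_image.2 le_cost⟩
  rw [W2, isLeast.csInf_eq, Real.sq_sqrt]
  exact cost_eq ▸ integral_nonneg fun _ ↦ by positivity

theorem W2_sq_eq_of_inner_le_add [InnerProductSpace ℝ E] {φ ψ : E → ℝ}
    (hρ : MemLp id 2 ρ) (hμ : MemLp id 2 μ) (hφ : Integrable φ ρ) (hψ : Integrable ψ μ)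
    (hle : ∀ᵐ x ∂ρ, ∀ y, ⟪x, y⟫ ≤ φ x + ψ y) (hγ : γ ∈ Couplings ρ μ)
    (heq : ∀ᵐ p ∂γ, ⟪p.1, p.2⟫ = φ p.1 + ψ p.2) :
    W2 ρ μ ^ 2 =
      ∫ x, ‖x‖ ^ 2 ∂ρ + ∫ y, ‖y‖ ^ 2 ∂μ - 2 * (∫ x, φ x ∂ρ + ∫ y, ψ y ∂μ) := by
  have hρ_sq : Integrable (fun x ↦ ‖x‖ ^ 2) ρ := hρ.integrable_norm_pow two_ne_zero
  have hμ_sq : Integrable (fun y ↦ ‖y‖ ^ 2) μ := hμ.integrable_norm_pow two_ne_zero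
  rw [W2_sq_eq_of_add_le_norm_sub_sq (f := fun x ↦ ‖x‖ ^ 2 - 2 * φ x)
      (g := fun y ↦ ‖y‖ ^ 2 - 2 * ψ y) hρ hμ (hρ_sq.sub (hφ.const_mul 2))
      (hμ_sq.sub (hψ.const_mul 2)) ?_ hγ ?_,
    integral_sub hρ_sq (hφ.const_mul 2), integral_sub hμ_sq (hψ.const_mul 2),
    integral_const_mul, integral_const_mul]
  · ring
  · filter_upwards [hle] with x hx y
    linarith [hx y, norm_sub_sq_real x y]
  · filter_upwards [heq] with p hp
    linarith [norm_sub_sq_real p.1 p.2]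

end Duality

section DiscreteMeasures

instance : IsProbabilityMeasure muZero :=
  ⟨by simp [muZero, ENNReal.inv_two_add_inv_two]⟩

lemma muEps_eq_smul_muZero_add (ε : ℝ) :
    muEps ε = ENNReal.ofReal (1 - ε) • muZero + ENNReal.ofReal ε • Measure.dirac 0 := by
  rw [muEps, muZero, smul_smul, ← sub_div, ENNReal.ofReal_div_of_pos two_pos,
    ENNReal.ofReal_ofNat, div_eq_mul_inv]

lemma muEps_zero : muEps 0 = muZero := by
  simp [muEps_eq_smul_muZero_add]

lemma integrable_muZero (f : ℝ → ℝ) : Integrable f muZero :=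
  ((integrable_dirac (by simp)).add_measure (integrable_dirac (by simp))).smul_measure (by simp)

lemma integrable_muEps (ε : ℝ) (f : ℝ → ℝ) : Integrable f (muEps ε) := by
  rw [muEps_eq_smul_muZero_add]
  exact ((integrable_muZero f).smul_measure ENNReal.ofReal_ne_top).add_measure
    ((integrable_dirac (by simp)).smul_measure ENNReal.ofReal_ne_top)

lemma memLp_id_muEps (ε : ℝ) : MemLp id 2 (muEps ε) :=
  (memLp_two_iff_integrable_sq aestronglyMeasurable_id).2 (integrable_muEps ε _)

lemma memLp_id_muZero : MemLp id 2 muZero :=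
  muEps_zero ▸ memLp_id_muEps 0

lemma integral_muZero (f : ℝ → ℝ) : ∫ x, f x ∂muZero = (f (-1) + f 1) / 2 := by
  rw [muZero, integral_smul_measure,
    integral_add_measure (integrable_dirac (by simp)) (integrable_dirac (by simp)),
    integral_dirac, integral_dirac, ENNReal.toReal_inv, ENNReal.toReal_ofNat, smul_eq_mul,
    inv_mul_eq_div]

lemma integral_muEps {ε : ℝ} (hε₀ : 0 ≤ ε) (hε₁ : ε ≤ 1) (f : ℝ → ℝ) :
    ∫ x, f x ∂(muEps ε) = (1 - ε) * ((f (-1) + f 1) / 2) + ε * f 0 := by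
  rw [muEps_eq_smul_muZero_add,
    integral_add_measure ((integrable_muZero f).smul_measure ENNReal.ofReal_ne_top)
      ((integrable_dirac (by simp)).smul_measure ENNReal.ofReal_ne_top),
    integral_smul_measure, integral_smul_measure, integral_muZero, integral_dirac,
    ENNReal.toReal_ofReal (sub_nonneg.2 hε₁), ENNReal.toReal_ofReal hε₀, smul_eq_mul, smul_eq_mul]

lemma ae_muZero_abs_eq_one : ∀ᵐ x ∂muZero, |x| = 1 :=
  Measure.ae_smul_measure (ae_add_measure_iff.2 (by simp [ae_dirac_eq])) _

lemma ae_muEps_abs_le_one (ε : ℝ) : ∀ᵐ x ∂(muEps ε), |x| ≤ 1 := by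
  rw [muEps_eq_smul_muZero_add, ae_add_measure_iff]
  exact ⟨Measure.ae_smul_measure (ae_muZero_abs_eq_one.mono fun _ ↦ le_of_eq) _,
    Measure.ae_smul_measure (by simp [ae_dirac_eq]) _⟩

/-- The optimal plan from `μ⁰` to `μ^ε`: the fraction `1 - ε` of the mass of `μ⁰` stays in place and
the fraction `ε` moves to `0`. -/
def partialCollapsePlan (ε : ℝ) : Measure (ℝ × ℝ) :=
  ENNReal.ofReal (1 - ε) • muZero.map (fun x ↦ (x, x)) +
    ENNReal.ofReal ε • muZero.map (fun x ↦ (x, 0))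

lemma partialCollapsePlan_mem_couplings {ε : ℝ} (hε₀ : 0 ≤ ε) (hε₁ : ε ≤ 1) :
    partialCollapsePlan ε ∈ Couplings muZero (muEps ε) := by
  have h := add_mem_couplings
    (smul_mem_couplings (map_prodMk_mem_couplings measurable_id measurable_id muZero)
      (ENNReal.ofReal (1 - ε)))
    (smul_mem_couplings (map_prodMk_mem_couplings measurable_id
      (measurable_const (a := (0 : ℝ))) muZero) (ENNReal.ofReal ε))
  have total : ENNReal.ofReal (1 - ε) + ENNReal.ofReal ε = 1 := by
    rw [← ENNReal.ofReal_add (sub_nonneg.2 hε₁) hε₀, sub_add_cancel, ENNReal.ofReal_one]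
  rwa [Measure.map_id, Measure.map_const, measure_univ, one_smul, ← add_smul, total, one_smul,
    ← muEps_eq_smul_muZero_add] at h

lemma ae_partialCollapsePlan_mul_eq_abs (ε : ℝ) :
    ∀ᵐ p ∂(partialCollapsePlan ε), p.1 * p.2 = |p.2| := by
  have hmeas : MeasurableSet {p : ℝ × ℝ | p.1 * p.2 = |p.2|} :=
    measurableSet_eq_fun (by fun_prop) (by fun_prop)
  refine ae_add_measure_iff.2 ⟨Measure.ae_smul_measure ?_ _, Measure.ae_smul_measure ?_ _⟩ <;>
    rw [ae_map_iff (by fun_prop) hmeas]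
  · filter_upwards [ae_muZero_abs_eq_one] with x hx
    rw [← abs_mul_abs_self, hx, one_mul]
  · simp

theorem W2_muZero_muEps_sq {ε : ℝ} (hε₀ : 0 ≤ ε) (hε₁ : ε ≤ 1) :
    W2 muZero (muEps ε) ^ 2 = ε := by
  rw [W2_sq_eq_of_inner_le_add (φ := fun _ ↦ 0) (ψ := fun y ↦ |y|) memLp_id_muZero
    (memLp_id_muEps ε) (integrable_muZero _) (integrable_muEps ε _) ?_
    (partialCollapsePlan_mem_couplings hε₀ hε₁) ?_, integral_muZero, integral_muZero,
    integral_muEps hε₀ hε₁, integral_muEps hε₀ hε₁]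
  · simp only [norm_neg, norm_one, norm_zero, abs_neg, abs_one, abs_zero]
    ring
  · filter_upwards [ae_muZero_abs_eq_one] with x hx y
    calc
      ⟪x, y⟫ ≤ ‖x‖ * ‖y‖ := real_inner_le_norm x y
      _ = 0 + |y| := by rw [Real.norm_eq_abs, hx, one_mul, zero_add, Real.norm_eq_abs]
  · filter_upwards [ae_partialCollapsePlan_mul_eq_abs ε] with p hp
    rw [RCLike.inner_apply', conj_trivial, hp, zero_add]

end DiscreteMeasures

section UniformMeasure

lemma integrable_rhoUnif_of_continuous {f : ℝ → ℝ} (hf : Continuous f) : Integrable f rhoUnif :=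
  hf.continuousOn.integrableOn_Icc

lemma memLp_id_rhoUnif : MemLp id 2 rhoUnif :=
  (memLp_two_iff_integrable_sq aestronglyMeasurable_id).2
    (integrable_rhoUnif_of_continuous (by fun_prop))

lemma integral_rhoUnif (f : ℝ → ℝ) : ∫ y, f y ∂rhoUnif = ∫ y in (-(1 / 2))..(1 / 2), f y := by
  rw [rhoUnif, integral_Icc_eq_integral_Ioc, intervalIntegral.integral_of_le (by norm_num)]

lemma intervalIntegral_neg_self_of_even {E : Type*} [NormedAddCommGroup E] [NormedSpace ℝ E]
    {f : ℝ → E} {a : ℝ} (hf : f.Even) (hint : IntervalIntegrable f volume 0 a) :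
    ∫ y in (-a)..a, f y = (2 : ℝ) • ∫ y in 0..a, f y := by
  have hcomp : (fun y ↦ f (-y)) = f := funext hf
  have hint_left : IntervalIntegrable f volume (-a) 0 := by
    have h := ((IntervalIntegrable.iff_comp_neg (by finiteness)).1 hint).symm
    rwa [hcomp, neg_zero] at h
  have left_eq : ∫ y in (-a)..0, f y = ∫ y in 0..a, f y := by
    have h := intervalIntegral.integral_comp_neg (a := 0) (b := a) f
    rw [hcomp, neg_zero] at h
    exact h.symm
  rw [← intervalIntegral.integral_add_adjacent_intervals hint_left hint, left_eq, two_smul]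

lemma intervalIntegral_max_zero_sub {a b c : ℝ} (hac : a ≤ c) (hcb : c ≤ b) :
    ∫ y in a..b, max 0 (y - c) = (b - c) ^ 2 / 2 := by
  have hint (u v : ℝ) : IntervalIntegrable (fun y ↦ max 0 (y - c)) volume u v :=
    Continuous.intervalIntegrable (by fun_prop) u v
  have left : ∫ y in a..c, max 0 (y - c) = 0 := by
    refine intervalIntegral.integral_zero_ae (ae_of_all _ fun y hy ↦ ?_)
    rw [uIoc_of_le hac] at hy
    exact max_eq_left (sub_nonpos.2 hy.2)
  have right : ∫ y in c..b, max 0 (y - c) = ∫ y in c..b, (y - c) := by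
    refine intervalIntegral.integral_congr fun y hy ↦ ?_
    rw [uIcc_of_le hcb] at hy
    exact max_eq_right (sub_nonneg.2 hy.1)
  rw [← intervalIntegral.integral_add_adjacent_intervals (hint a c) (hint c b), left, right,
    intervalIntegral.integral_comp_sub_right (fun y ↦ y), integral_id]
  ring

lemma integral_rhoUnif_sq : ∫ y, y ^ 2 ∂rhoUnif = 1 / 12 := by
  rw [integral_rhoUnif, integral_pow]
  norm_num

lemma integral_rhoUnif_max_zero_abs_sub {c : ℝ} (hc₀ : 0 ≤ c) (hc₁ : c ≤ 1 / 2) :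
    ∫ y, max 0 (|y| - c) ∂rhoUnif = (1 / 2 - c) ^ 2 := by
  have half : ∫ y in 0..(1 / 2), max 0 (|y| - c) = (1 / 2 - c) ^ 2 / 2 := by
    rw [← intervalIntegral_max_zero_sub hc₀ hc₁]
    refine intervalIntegral.integral_congr fun y hy ↦ ?_
    rw [uIcc_of_le (by norm_num)] at hy
    simp only [abs_of_nonneg hy.1]
  rw [integral_rhoUnif, intervalIntegral_neg_self_of_even (fun y ↦ by rw [abs_neg])
    (Continuous.intervalIntegrable (by fun_prop) _ _), half, smul_eq_mul,
    mul_div_cancel₀ _ two_ne_zero]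

lemma inner_le_mul_norm_add_max {E : Type*} [NormedAddCommGroup E] [InnerProductSpace ℝ E] {x : E}
    (hx : ‖x‖ ≤ 1) (y : E) (c : ℝ) : ⟪x, y⟫ ≤ c * ‖x‖ + max 0 (‖y‖ - c) :=
  calc
    ⟪x, y⟫ ≤ ‖x‖ * ‖y‖ := real_inner_le_norm x y
    _ = c * ‖x‖ + ‖x‖ * (‖y‖ - c) := by ring
    _ ≤ c * ‖x‖ + ‖x‖ * max 0 (‖y‖ - c) := by gcongr; exact le_max_right _ _
    _ ≤ c * ‖x‖ + max 0 (‖y‖ - c) := by gcongr; exact mul_le_of_le_one_left (le_max_left _ _) hx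

/-- The optimal transport map from `ρ` to `μ^ε`, the monotone step function with values `-1, 0, 1`
jumping at `±ε / 2`. -/
def transportMap (ε y : ℝ) : ℝ :=
  if y < -(ε / 2) then -1 else if y < ε / 2 then 0 else 1

lemma measurable_transportMap (ε : ℝ) : Measurable (transportMap ε) :=
  measurable_const.ite measurableSet_Iio (measurable_const.ite measurableSet_Iio measurable_const)

lemma transportMap_mul_self {ε : ℝ} (hε : 0 ≤ ε) (y : ℝ) :
    transportMap ε y * y = ε / 2 * |transportMap ε y| + max 0 (|y| - ε / 2) := by
  unfold transportMap
  split_ifs with hneg hpos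
  · rw [abs_of_neg (hneg.trans_le (by linarith)), max_eq_right (by linarith), abs_neg, abs_one]
    ring
  · have hy : |y| ≤ ε / 2 := abs_le.2 ⟨not_lt.1 hneg, hpos.le⟩
    rw [max_eq_left (by linarith), abs_zero]
    ring
  · rw [abs_one, abs_of_nonneg (by linarith), max_eq_right (by linarith)]
    ring

lemma map_restrict_of_eqOn_const {α β : Type*} [MeasurableSpace α] [MeasurableSpace β]
    (μ : Measure α) {f : α → β} {s : Set α} {c : β} (hs : MeasurableSet s)
    (hf : EqOn f (fun _ ↦ c) s) :
    (μ.restrict s).map f = μ s • Measure.dirac c := by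
  rw [Measure.map_congr (ae_restrict_of_forall_mem hs hf), Measure.map_const,
    Measure.restrict_apply_univ]

lemma restrict_Icc_eq_restrict_Ico_add_restrict_Icc (μ : Measure ℝ) {a b c : ℝ} (hab : a ≤ b)
    (hbc : b ≤ c) :
    μ.restrict (Icc a c) = μ.restrict (Ico a b) + μ.restrict (Icc b c) := by
  rw [← Ico_union_Icc_eq_Icc hab hbc, Measure.restrict_union _ measurableSet_Icc]
  exact disjoint_left.2 fun x hx hx' ↦ hx.2.not_ge hx'.1

lemma map_transportMap_rhoUnif {ε : ℝ} (hε₀ : 0 ≤ ε) (hε₁ : ε ≤ 1) :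
    rhoUnif.map (transportMap ε) = muEps ε := by
  have left : EqOn (transportMap ε) (fun _ ↦ -1) (Ico (-(1 / 2)) (-(ε / 2))) :=
    fun y hy ↦ if_pos hy.2
  have middle : EqOn (transportMap ε) (fun _ ↦ 0) (Ico (-(ε / 2)) (ε / 2)) := fun y hy ↦ by
    rw [transportMap, if_neg hy.1.not_gt, if_pos hy.2]
  have right : EqOn (transportMap ε) (fun _ ↦ 1) (Icc (ε / 2) (1 / 2)) := fun y hy ↦ by
    rw [transportMap, if_neg (by linarith [hy.1]), if_neg hy.1.not_gt]
  have hmeas := measurable_transportMap ε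
  rw [rhoUnif,
    restrict_Icc_eq_restrict_Ico_add_restrict_Icc volume (b := -(ε / 2)) (by linarith)
      (by linarith),
    restrict_Icc_eq_restrict_Ico_add_restrict_Icc volume (b := ε / 2) (by linarith)
      (by linarith),
    Measure.map_add _ _ hmeas, Measure.map_add _ _ hmeas,
    map_restrict_of_eqOn_const _ measurableSet_Ico left,
    map_restrict_of_eqOn_const _ measurableSet_Ico middle,
    map_restrict_of_eqOn_const _ measurableSet_Icc right, Real.volume_Ico, Real.volume_Ico,
    Real.volume_Icc, muEps, smul_add, neg_sub_neg, sub_neg_eq_add, add_halves]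
  abel

theorem W2_muEps_rhoUnif_sq {ε : ℝ} (hε₀ : 0 ≤ ε) (hε₁ : ε ≤ 1) :
    W2 (muEps ε) rhoUnif ^ 2 = 7 / 12 - ε + ε ^ 2 / 2 := by
  have plan_mem : rhoUnif.map (fun y ↦ (transportMap ε y, y)) ∈ Couplings (muEps ε) rhoUnif := by
    simpa only [map_transportMap_rhoUnif hε₀ hε₁, Measure.map_id, id] using
      map_prodMk_mem_couplings (measurable_transportMap ε) measurable_id rhoUnif
  rw [W2_sq_eq_of_inner_le_add (φ := fun x ↦ ε / 2 * |x|) (ψ := fun y ↦ max 0 (|y| - ε / 2))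
    (memLp_id_muEps ε) memLp_id_rhoUnif (integrable_muEps ε _)
    (integrable_rhoUnif_of_continuous (by fun_prop)) ?_ plan_mem ?_]
  · simp only [Real.norm_eq_abs, sq_abs]
    rw [integral_muEps hε₀ hε₁, integral_muEps hε₀ hε₁, integral_rhoUnif_sq,
      integral_rhoUnif_max_zero_abs_sub (by linarith) (by linarith), abs_neg, abs_one, abs_zero]
    ring
  · filter_upwards [ae_muEps_abs_le_one ε] with x hx y
    exact inner_le_mul_norm_add_max hx y (ε / 2)
  · have hmeas : MeasurableSet
        {p : ℝ × ℝ | ⟪p.1, p.2⟫ = ε / 2 * |p.1| + max 0 (|p.2| - ε / 2)} :=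
      measurableSet_eq_fun (by fun_prop) (by fun_prop)
    rw [ae_map_iff ((measurable_transportMap ε).prodMk measurable_id').aemeasurable hmeas]
    refine ae_of_all _ fun y ↦ ?_
    rw [RCLike.inner_apply', conj_trivial, transportMap_mul_self hε₀]

end UniformMeasure

/-- **Lower bound on the strong convexity exponent (Remark).**
For `0 < ε < 1`: (i) `W₂²(μ⁰, μ^ε) = ε`;
(ii) `½W₂²(μ^ε,ρ) - ½W₂²(μ⁰,ρ) = ε²/4 - ε/2`;
(iii) `⟨½‖·‖², μ^ε - μ⁰⟩ = -ε/2`; hence, for the Kantorovich potential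
`ψ_{ρ→μ⁰}` vanishing on `[-1,1]`, the convexity gap equals
`ε²/4 = ¼ W₂⁴(μ⁰, μ^ε)`. -/
theorem exponent_lower_bound_example (ε : ℝ) (hε : 0 < ε) (hε' : ε < 1) :
    W2 muZero (muEps ε) ^ 2 = ε ∧
    (1 / 2) * W2 (muEps ε) rhoUnif ^ 2 - (1 / 2) * W2 muZero rhoUnif ^ 2 =
      ε ^ 2 / 4 - ε / 2 ∧
    (∫ x, x ^ 2 / 2 ∂(muEps ε)) - (∫ x, x ^ 2 / 2 ∂muZero) = -ε / 2 ∧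
    (1 / 2) * W2 (muEps ε) rhoUnif ^ 2 - (1 / 2) * W2 muZero rhoUnif ^ 2 -
        ((∫ x, x ^ 2 / 2 ∂(muEps ε)) - ∫ x, x ^ 2 / 2 ∂muZero) = ε ^ 2 / 4 ∧
    ε ^ 2 / 4 = (1 / 4) * W2 muZero (muEps ε) ^ 4 := by
  have W2_sq_zero : W2 muZero rhoUnif ^ 2 = 7 / 12 := by
    simpa [muEps_zero] using W2_muEps_rhoUnif_sq le_rfl zero_le_one
  have hW2 := W2_muZero_muEps_sq hε.le hε'.le
  have energy_gap : (1 / 2) * W2 (muEps ε) rhoUnif ^ 2 - (1 / 2) * W2 muZero rhoUnif ^ 2 =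
      ε ^ 2 / 4 - ε / 2 := by
    rw [W2_muEps_rhoUnif_sq hε.le hε'.le, W2_sq_zero]
    ring
  have moment_gap : (∫ x, x ^ 2 / 2 ∂(muEps ε)) - (∫ x, x ^ 2 / 2 ∂muZero) = -ε / 2 := by
    rw [integral_muEps hε.le hε'.le, integral_muZero]
    ring
  refine ⟨hW2, energy_gap, moment_gap, ?_, ?_⟩
  · rw [energy_gap, moment_gap]
    ring
  · rw [show W2 muZero (muEps ε) ^ 4 = (W2 muZero (muEps ε) ^ 2) ^ 2 by ring, hW2]
    ring
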